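/- Suppose 1 ≤ S < N. Then there exist infinitely many unbiased estimators for the sparse signal-in-noise model: there is a sequence x̂⁽ⁿ⁾ (n ∈ ℕ) of measurable estimators, each unbiased at every x ∈ X_S, such that for all m ≠ n the set {y ∈ ℝ^N : x̂⁽ᵐ⁾(y) ≠ x̂⁽ⁿ⁾(y)} has positive Lebesgue measure (so the estimators are pairwise distinct even up to modifications on null sets). -/

import Mathlib

open MeasureTheory ProbabilityTheory Filter
open scoped ENNReal Classical

/-- The product Gaussian measure `P_x` on `ℝ^N` with mean `x` and variance `σ²` per coordinate. -/
noncomputable def gaussP (N : ℕ) (σ : ℝ) (x : Fin N → ℝ) : Measure (Fin N → ℝ) :=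
  MeasureTheory.Measure.pi fun i => gaussianReal (x i) (Real.toNNReal (σ ^ 2))

/-- The support of `x`: indices with nonzero entries. Its cardinality is `‖x‖₀`. -/
noncomputable def supp {N : ℕ} (x : Fin N → ℝ) : Finset (Fin N) :=
  Finset.univ.filter fun i => x i ≠ 0

/-- The sparse parameter set `X_S = {x : ‖x‖₀ ≤ S}`. -/
def sparseSet (N S : ℕ) : Set (Fin N → ℝ) := {x | (supp x).card ≤ S}

/-- An estimator is unbiased if each component is `P_x`-integrable with mean `x i`
for every `x ∈ X_S`. -/
def Unbiased (N S : ℕ) (σ : ℝ) (est : (Fin N → ℝ) → Fin N → ℝ) : Prop :=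
  ∀ x ∈ sparseSet N S, ∀ i,
    Integrable (fun y => est y i) (gaussP N σ x) ∧
    (∫ y, est y i ∂gaussP N σ x) = x i

/-- The MSE `ε(x; x̂) = ∫ ‖x̂(y) − x‖₂² dP_x(y)`, as an extended real. -/
noncomputable def MSE (N : ℕ) (σ : ℝ) (est : (Fin N → ℝ) → Fin N → ℝ)
    (x : Fin N → ℝ) : ℝ≥0∞ :=
  ∫⁻ y, ENNReal.ofReal (∑ i, (est y i - x i) ^ 2) ∂gaussP N σ x

/-!
On `X_S` with `S < N` every parameter `x` has a zero entry, so by independence of the coordinates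
the product `∏ j, y j` has mean `∏ j, x j = 0` under `P_x`. Any multiple of it can therefore be
added to the identity estimator without introducing bias, and distinct multiples give distinct
continuous maps, which cannot agree Lebesgue-almost everywhere.
-/

/-- An unbiased estimator of zero over `X_S`: each component is `P_x`-integrable with mean `0` for
every `x ∈ X_S`. These are the perturbations that preserve unbiasedness. -/
def UnbiasedOfZero (N S : ℕ) (σ : ℝ) (err : (Fin N → ℝ) → Fin N → ℝ) : Prop :=
  ∀ x ∈ sparseSet N S, ∀ i,
    Integrable (fun y => err y i) (gaussP N σ x) ∧ ∫ y, err y i ∂gaussP N σ x = 0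

/-- The product of all coordinates of `y`, repeated in every component, so that it can serve as a
perturbation of a vector-valued estimator. -/
def coordProd {ι : Type*} [Fintype ι] (y : ι → ℝ) : ι → ℝ :=
  fun _ => ∏ j, y j

section CoordProd

variable {ι : Type*} [Fintype ι]

lemma continuous_coordProd : Continuous (coordProd : (ι → ℝ) → ι → ℝ) := by
  unfold coordProd
  fun_prop

lemma coordProd_ne_zero [Nonempty ι] : (coordProd : (ι → ℝ) → ι → ℝ) ≠ 0 := fun h => by
  have h_one : coordProd (1 : ι → ℝ) = 0 := congrFun h 1
  simpa [coordProd] using congrFun h_one (Classical.arbitrary ι)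

end CoordProd

section ProductGaussian

lemma integrable_id_gaussianReal (m : ℝ) (v : NNReal) :
    Integrable (fun t => t) (gaussianReal m v) :=
  memLp_one_iff_integrable.mp (memLp_id_gaussianReal 1)

variable {ι : Type*} [Fintype ι] (m : ι → ℝ) (v : ι → NNReal)

lemma integrable_eval_pi_gaussianReal (i : ι) :
    Integrable (fun y => y i) (Measure.pi fun j => gaussianReal (m j) (v j)) :=
  integrable_comp_eval (μ := fun j => gaussianReal (m j) (v j)) (integrable_id_gaussianReal _ _)

lemma integral_eval_pi_gaussianReal (i : ι) :
    ∫ y, y i ∂(Measure.pi fun j => gaussianReal (m j) (v j)) = m i :=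
  (integral_comp_eval (μ := fun j => gaussianReal (m j) (v j))
    aestronglyMeasurable_id).trans integral_id_gaussianReal

lemma integrable_prod_pi_gaussianReal :
    Integrable (fun y => ∏ j, y j) (Measure.pi fun j => gaussianReal (m j) (v j)) :=
  Integrable.fintype_prod (f := fun _ t => t) fun _ => integrable_id_gaussianReal _ _

lemma integral_prod_pi_gaussianReal :
    ∫ y, ∏ j, y j ∂(Measure.pi fun j => gaussianReal (m j) (v j)) = ∏ j, m j :=
  (integral_fintype_prod_eq_prod fun _ t => t).trans
    (Finset.prod_congr rfl fun _ _ => integral_id_gaussianReal)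

end ProductGaussian

lemma measure_setOf_ne_pos {X Y : Type*} [TopologicalSpace X] [MeasurableSpace X]
    [TopologicalSpace Y] [T2Space Y] {μ : Measure X} [μ.IsOpenPosMeasure] {f g : X → Y}
    (hf : Continuous f) (hg : Continuous g) (hfg : f ≠ g) : 0 < μ {x | f x ≠ g x} :=
  pos_iff_ne_zero.mpr fun h => hfg <| (hf.ae_eq_iff_eq μ hg).mp (ae_iff.mpr h)

section Sparse

variable {N S : ℕ} {σ : ℝ}

lemma exists_eq_zero_of_mem_sparseSet {x : Fin N → ℝ} (hSN : S < N) (hx : x ∈ sparseSet N S) :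
    ∃ j, x j = 0 := by
  have hcard : (supp x).card < (Finset.univ : Finset (Fin N)).card :=
    (show (supp x).card ≤ S from hx).trans_lt (by simpa using hSN)
  obtain ⟨j, -, hj⟩ := Finset.exists_mem_notMem_of_card_lt_card hcard
  exact ⟨j, by simpa [supp] using hj⟩

lemma unbiased_id : Unbiased N S σ id := fun x _ i =>
  ⟨integrable_eval_pi_gaussianReal x _ i, integral_eval_pi_gaussianReal x _ i⟩

lemma unbiasedOfZero_coordProd (hSN : S < N) : UnbiasedOfZero N S σ coordProd := fun x hx _ => by
  obtain ⟨j, hj⟩ := exists_eq_zero_of_mem_sparseSet hSN hx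
  exact ⟨integrable_prod_pi_gaussianReal x _,
    (integral_prod_pi_gaussianReal x _).trans (Finset.prod_eq_zero (Finset.mem_univ j) hj)⟩

lemma Unbiased.add_smul {est err : (Fin N → ℝ) → Fin N → ℝ} (hest : Unbiased N S σ est)
    (herr : UnbiasedOfZero N S σ err) (c : ℝ) : Unbiased N S σ (est + c • err) := fun x hx i => by
  obtain ⟨hest_int, hest_mean⟩ := hest x hx i
  obtain ⟨herr_int, herr_mean⟩ := herr x hx i
  refine ⟨hest_int.add (herr_int.const_mul c), ?_⟩
  calc ∫ y, est y i + c * err y i ∂gaussP N σ x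
      = ∫ y, est y i ∂gaussP N σ x + c * ∫ y, err y i ∂gaussP N σ x := by
        rw [integral_add hest_int (herr_int.const_mul c), integral_const_mul]
    _ = x i := by rw [hest_mean, herr_mean, mul_zero, add_zero]

end Sparse

/-- For `S < N` there are infinitely many unbiased estimators: a sequence of measurable
unbiased estimators that pairwise differ on a set of positive Lebesgue measure. -/
theorem stmt_1 (N S : ℕ) (σ : ℝ) (hσ : 0 < σ) (hS : 1 ≤ S) (hSN : S < N) :
    ∃ est : ℕ → (Fin N → ℝ) → Fin N → ℝ,
      (∀ n, Measurable (est n) ∧ Unbiased N S σ (est n)) ∧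
      ∀ m n, m ≠ n →
        0 < MeasureTheory.volume {y : Fin N → ℝ | est m y ≠ est n y} := by
  have : NeZero N := ⟨by omega⟩
  have hcont (n : ℕ) : Continuous (id + (n : ℝ) • coordProd : (Fin N → ℝ) → Fin N → ℝ) :=
    continuous_id.add (continuous_coordProd.const_smul _)
  refine ⟨fun n => id + (n : ℝ) • coordProd, fun n => ⟨(hcont n).measurable, ?_⟩, fun m n hmn => ?_⟩
  · exact unbiased_id.add_smul (unbiasedOfZero_coordProd hSN) n
  · refine measure_setOf_ne_pos (hcont m) (hcont n) fun h => hmn ?_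
    exact Nat.cast_injective (smul_left_injective ℝ coordProd_ne_zero (add_left_cancel h))
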